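/- (Watanabe's Lemma, first part.) Let I be an arithmetically Gorenstein homogeneous ideal of height three in R that is not a complete intersection, and let f, g, h ∈ I be a regular sequence of homogeneous elements that can be extended to a minimal generating set of I (i.e., there is a subset S of R with f, g, h ∈ S, I = (S), and |S| = μ(I)). Then the residual ideal J = (f,g,h) : I is an almost complete intersection: there exists a homogeneous element u ∈ R such that J = (f, g, h, u). -/

import Mathlib

/-
Common setup: `R = k[x₀,…,xₙ]` is the standard graded polynomial ring
`MvPolynomial (Fin (n+1)) k` over a field `k`.
-/

open CategoryTheory MvPolynomial RingTheory

noncomputable section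

variable {k : Type} [Field k] {n : ℕ}

/-- A homogeneous ideal: one generated by homogeneous elements. -/
def IsHomogeneousIdeal (I : Ideal (MvPolynomial (Fin (n+1)) k)) : Prop :=
  ∃ S : Set (MvPolynomial (Fin (n+1)) k),
    (∀ f ∈ S, ∃ d, MvPolynomial.IsHomogeneous f d) ∧ I = Ideal.span S

/-- The height of an ideal: the infimum of the heights of the primes containing it. -/
def idealHeight (I : Ideal (MvPolynomial (Fin (n+1)) k)) : ℕ∞ :=
  ⨅ (p : PrimeSpectrum (MvPolynomial (Fin (n+1)) k)) (_ : I ≤ p.asIdeal), Order.height p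

/-- A complete intersection ideal: one generated by a regular sequence of homogeneous
elements of positive degree. -/
def IsCI (I : Ideal (MvPolynomial (Fin (n+1)) k)) : Prop :=
  ∃ l : List (MvPolynomial (Fin (n+1)) k),
    (∀ f ∈ l, ∃ d, 0 < d ∧ MvPolynomial.IsHomogeneous f d) ∧
    RingTheory.Sequence.IsRegular (MvPolynomial (Fin (n+1)) k) l ∧
    I = Ideal.span {x | x ∈ l}

/-- Vanishing of `Ext^i_R(R/I, R)`. -/
def extVanishes (I : Ideal (MvPolynomial (Fin (n+1)) k)) (i : ℕ) : Prop :=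
  Subsingleton (((Ext (MvPolynomial (Fin (n+1)) k) (ModuleCat (MvPolynomial (Fin (n+1)) k)) i).obj
    (Opposite.op (ModuleCat.of _ (MvPolynomial (Fin (n+1)) k ⧸ I)))).obj
    (ModuleCat.of _ (MvPolynomial (Fin (n+1)) k)))

/-- `Ext^i_R(R/I, R)` is a cyclic `R`-module. -/
def extCyclic (I : Ideal (MvPolynomial (Fin (n+1)) k)) (i : ℕ) : Prop :=
  ∃ m : (((Ext (MvPolynomial (Fin (n+1)) k) (ModuleCat (MvPolynomial (Fin (n+1)) k)) i).obj
      (Opposite.op (ModuleCat.of _ (MvPolynomial (Fin (n+1)) k ⧸ I)))).obj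
      (ModuleCat.of _ (MvPolynomial (Fin (n+1)) k))),
    Submodule.span (MvPolynomial (Fin (n+1)) k) {m} = ⊤

/-- An arithmetically Gorenstein homogeneous ideal of height three: a proper homogeneous
ideal of height 3 with `Ext^i_R(R/I, R) = 0` for `i ≠ 3` and `Ext^3_R(R/I, R)` cyclic. -/
def IsArithGorHt3 (I : Ideal (MvPolynomial (Fin (n+1)) k)) : Prop :=
  I ≠ ⊤ ∧ IsHomogeneousIdeal I ∧ idealHeight I = 3 ∧
    (∀ i : ℕ, i ≠ 3 → extVanishes I i) ∧ extCyclic I 3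

/-- `μ(I)`: the least cardinality of a subset of `R` generating `I`. -/
def mu (I : Ideal (MvPolynomial (Fin (n+1)) k)) : ℕ :=
  sInf {m : ℕ | ∃ S : Finset (MvPolynomial (Fin (n+1)) k),
    S.card = m ∧ Ideal.span (S : Set (MvPolynomial (Fin (n+1)) k)) = I}

/-- `a_i(I)`: the least integer `d` such that `I` contains a regular sequence of `i`
homogeneous elements each of degree at most `d`. -/
def aDeg (i : ℕ) (I : Ideal (MvPolynomial (Fin (n+1)) k)) : ℕ :=
  sInf {d : ℕ | ∃ l : List (MvPolynomial (Fin (n+1)) k), l.length = i ∧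
    (∀ f ∈ l, f ∈ I) ∧ (∀ f ∈ l, ∃ e ≤ d, MvPolynomial.IsHomogeneous f e) ∧
    RingTheory.Sequence.IsRegular (MvPolynomial (Fin (n+1)) k) l}

/-- A minimal complete intersection inside a height-three homogeneous ideal `I`:
a regular sequence `f₁, f₂, f₃` of homogeneous elements of `I` with `deg fⱼ = a_j(I)`. -/
def IsMinCI (I : Ideal (MvPolynomial (Fin (n+1)) k)) (f₁ f₂ f₃ : MvPolynomial (Fin (n+1)) k) :
    Prop :=
  f₁ ∈ I ∧ f₂ ∈ I ∧ f₃ ∈ I ∧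
  MvPolynomial.IsHomogeneous f₁ (aDeg 1 I) ∧ MvPolynomial.IsHomogeneous f₂ (aDeg 2 I) ∧
  MvPolynomial.IsHomogeneous f₃ (aDeg 3 I) ∧
  RingTheory.Sequence.IsRegular (MvPolynomial (Fin (n+1)) k) [f₁, f₂, f₃]

/-!
For a weakly regular sequence `rs` in `I` with `a = (rs)` and `r = rs.length`, Rees' theorem gives
`Extʳ(R/I, R) ≃ Hom(R/I, R/a)`, and evaluation at `1` identifies the latter with `(a : I)/a`. So if
`Extʳ(R/I, R)` is cyclic, then `a : I = a + (u)`. In a graded ring with local degree-zero part, `u`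
may be replaced by its lowest homogeneous component `v` outside `a`: write `v = y + c u` with
`y ∈ a`, and let `c₀` be the degree-zero component of `c`. Comparing components in the
degree of `v` gives `(1 - c₀) v ∈ a`; as `v ∉ a`, locality makes `c₀` a unit, so `u ∈ a + (v)`.
-/

section ExtComparison

open Limits

universe w v u t

variable {R : Type t} [CommRing R] {C : Type u} [Category.{v} C] [Abelian C] {X Y : C}
  (P : ProjectiveResolution X)

section

variable [HasExt.{w} C]

lemma smul_extMk [Linear R C] {n : ℕ} (r : R) (f : P.complex.X n ⟶ Y) (m : ℕ) (hm : n + 1 = m)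
    (hf : P.complex.d m n ≫ f = 0) :
    r • P.extMk f m hm hf = P.extMk (r • f) m hm (by simp [hf]) := by
  rw [Abelian.Ext.smul_eq_comp_mk₀, P.extMk_comp_mk₀]
  simp

open CochainComplex.HomComplex in
lemma extMk_degree_zero_eq_zero_iff (f : P.complex.X 0 ⟶ Y) (hf : P.complex.d 1 0 ≫ f = 0) :
    P.extMk f 1 rfl hf = 0 ↔ f = 0 := by
  refine ⟨fun h ↦ ?_, fun h ↦ by simp [h]⟩
  rw [← P.extEquivCohomologyClass.apply_eq_iff_eq, P.extEquivCohomologyClass_extMk,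
    P.extEquivCohomologyClass_zero, CohomologyClass.mk_eq_zero_iff,
    Cocycle.toSingleMk_mem_coboundaries_iff _ _ _ _ _ 1 rfl] at h
  obtain ⟨g, hg⟩ := h
  have hX : IsZero (P.cochainComplex.X 1) := P.cochainComplex.isZero_of_isStrictlyLE 0 1
  rw [← cancel_epi (P.cochainComplexXIso (-(0 : ℕ)) 0 rfl).hom, ← hg, hX.eq_of_src g 0]
  simp

lemma extMk_eq_zero_iff_exists_prev {n : ℕ} (f : P.complex.X n ⟶ Y)
    (hf : P.complex.d (n + 1) n ≫ f = 0) :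
    P.extMk f (n + 1) rfl hf = 0 ↔
      ∃ g, P.complex.d n ((ComplexShape.up ℕ).prev n) ≫ g = f := by
  cases n with
  | zero => simp [extMk_degree_zero_eq_zero_iff P f hf, eq_comm (a := f)]
  | succ n =>
    rw [CochainComplex.prev_nat_succ]
    exact P.extMk_eq_zero_iff f (n + 2) rfl hf n rfl

variable [Linear R C]

variable (R Y) in
/-- The complex `Hom(P_{n-1}, Y) ⟶ Hom(P_n, Y) ⟶ Hom(P_{n+1}, Y)` computing `Extⁿ(X, Y)`;
for `n = 0` its first map is zero, because `prev 0 = 0`. -/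
abbrev homShortComplex (n : ℕ) : ShortComplex (ModuleCat R) :=
  (P.complex.linearYonedaObj R Y).sc' ((ComplexShape.up ℕ).prev n) n (n + 1)

variable (R Y) in
/-- The linear map sending an `n`-cocycle `P_n ⟶ Y` to its class in `Abelian.Ext X Y n`. -/
def extMkLinear (n : ℕ) :
    LinearMap.ker (homShortComplex R Y P n).g.hom →ₗ[R] Abelian.Ext X Y n where
  toFun f := P.extMk f.1 (n + 1) rfl f.2
  map_add' f g := (P.add_extMk f.1 g.1 (n + 1) rfl f.2 g.2).symm
  map_smul' r f := (smul_extMk P r f.1 (n + 1) rfl f.2).symm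

lemma extMkLinear_surjective (n : ℕ) : Function.Surjective (extMkLinear R Y P n) := fun α ↦
  have ⟨f, hf, hα⟩ := P.extMk_surjective α (n + 1) rfl
  ⟨⟨f, hf⟩, hα⟩

lemma ker_extMkLinear (n : ℕ) :
    LinearMap.ker (extMkLinear R Y P n) =
      LinearMap.range (homShortComplex R Y P n).moduleCatToCycles := by
  ext ⟨f, hf⟩
  refine (extMk_eq_zero_iff_exists_prev P f hf).trans (exists_congr fun g ↦ ?_)
  exact Iff.symm Subtype.ext_iff

end

variable (R X Y) in
/-- The comparison between the two constructions of `Extⁿ(X, Y)`: the derived functor `Ext` of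
`Hom(-, Y)`, and `Abelian.Ext`, defined by morphisms in the derived category. -/
def extLinearEquivAbelianExt [EnoughProjectives C] [HasExt.{w} C] [Linear R C] (n : ℕ) :
    ((Ext R C n).obj (Opposite.op X)).obj Y ≃ₗ[R] Abelian.Ext X Y n :=
  let P := projectiveResolution X
  (P.isoExt n Y ≪≫
      (P.complex.linearYonedaObj R Y).homologyIsoSc' _ n (n + 1) rfl (CochainComplex.next ℕ n) ≪≫
      (homShortComplex R Y P n).moduleCatHomologyIso).toLinearEquiv ≪≫ₗ
    Submodule.quotEquivOfEq _ _ (ker_extMkLinear P n).symm ≪≫ₗ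
    (extMkLinear R Y P n).quotKerEquivOfSurjective (extMkLinear_surjective P n)

end ExtComparison

section Rees

open Sequence Pointwise

universe u v

variable {R : Type u} [CommRing R] [Small.{v} R] {M N : ModuleCat.{v} R} {x : R}

lemma surjective_postcomp_extClass_of_mem_annihilator (hx : IsSMulRegular M x)
    (hxN : x ∈ Module.annihilator R N) (i : ℕ) :
    Function.Surjective
      (hx.smulShortComplex_shortExact.extClass.postcompOfLinear R N (rfl : i + 1 = i + 1)) := by
  intro α
  refine Abelian.Ext.covariant_sequence_exact₁ N hx.smulShortComplex_shortExact α ?_ rfl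
  exact congr($(Abelian.Ext.postcomp_smul_id_eq_zero_of_mem_annihilator (M := M) hxN (i + 1)) α)

lemma injective_postcomp_extClass (hx : IsSMulRegular M x) (i : ℕ)
    [Subsingleton (Abelian.Ext N M i)] :
    Function.Injective
      (hx.smulShortComplex_shortExact.extClass.postcompOfLinear R N (rfl : i + 1 = i + 1)) := by
  rw [injective_iff_map_eq_zero]
  intro α hα
  obtain ⟨β, rfl⟩ :=
    Abelian.Ext.covariant_sequence_exact₃ N hx.smulShortComplex_shortExact α rfl hα
  obtain rfl : β = 0 := Subsingleton.elim (α := Abelian.Ext N M i) β 0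
  exact Abelian.Ext.zero_comp ..

lemma subsingleton_ext_of_isWeaklyRegular {rs : List R} (hrs : IsWeaklyRegular M rs)
    (hN : ∀ r ∈ rs, r ∈ Module.annihilator R N) {i : ℕ} (hi : i < rs.length) :
    Subsingleton (Abelian.Ext N M i) := by
  induction rs generalizing M i with
  | nil => simp at hi
  | cons x rs ih =>
    obtain ⟨hx, hrs⟩ := (isWeaklyRegular_cons_iff M x rs).1 hrs
    obtain ⟨hxN, hN⟩ := List.forall_mem_cons.1 hN
    cases i with
    | zero =>
      have := hx.linearMap_subsingleton_of_mem_annihilator hxN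
      exact (Abelian.Ext.addEquiv₀.trans ModuleCat.homAddEquiv).subsingleton
    | succ i =>
      have : Subsingleton (Abelian.Ext N (M.smulShortComplex x).X₃ i) :=
        ih hrs hN (Nat.lt_of_succ_lt_succ hi)
      exact (surjective_postcomp_extClass_of_mem_annihilator hx hxN i).subsingleton

theorem nonempty_ext_length_linearEquiv_hom_quotient {rs : List R} (hrs : IsWeaklyRegular M rs)
    (hN : ∀ r ∈ rs, r ∈ Module.annihilator R N) :
    Nonempty (Abelian.Ext N M rs.length ≃ₗ[R]
      (N →ₗ[R] M ⧸ (Ideal.ofList rs • ⊤ : Submodule R M))) := by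
  induction rs generalizing M with
  | nil =>
    have e : (M ⧸ (Ideal.ofList ([] : List R) • ⊤ : Submodule R M)) ≃ₗ[R] M :=
      Submodule.quotEquivOfEqBot _ (by simp)
    exact ⟨Abelian.Ext.linearEquiv₀ ≪≫ₗ ModuleCat.homLinearEquiv ≪≫ₗ e.symm.congrRight⟩
  | cons x rs ih =>
    have := subsingleton_ext_of_isWeaklyRegular hrs hN (Nat.lt_succ_self rs.length)
    obtain ⟨hx, hrs⟩ := (isWeaklyRegular_cons_iff M x rs).1 hrs
    obtain ⟨hxN, hN⟩ := List.forall_mem_cons.1 hN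
    obtain ⟨e⟩ := ih (M := ModuleCat.of R (QuotSMulTop x M)) hrs hN
    let δ := LinearEquiv.ofBijective _ ⟨injective_postcomp_extClass (N := N) hx rs.length,
      surjective_postcomp_extClass_of_mem_annihilator hx hxN rs.length⟩
    exact ⟨δ.symm ≪≫ₗ e ≪≫ₗ
      (Submodule.quotOfListConsSMulTopEquivQuotSMulTopInner M x rs).symm.congrRight⟩

end Rees

section Colon

universe u

variable {R : Type*} [CommRing R]

lemma range_eval_one_hom_quotient (a I : Ideal R) :
    LinearMap.range (LinearMap.applyₗ (R := R) (M₂ := R ⧸ a) (1 : R ⧸ I)) =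
      Submodule.map a.mkQ (a.colon I) := by
  ext y
  constructor
  · rintro ⟨φ, rfl⟩
    obtain ⟨z, hz⟩ := Ideal.Quotient.mk_surjective (φ 1)
    refine ⟨z, Submodule.mem_colon.2 fun r hr ↦ ?_, hz⟩
    have hrφ : r • φ 1 = 0 := by
      rw [← map_smul, Algebra.smul_def, Ideal.Quotient.algebraMap_eq,
        Ideal.Quotient.eq_zero_iff_mem.2 hr, zero_mul, map_zero]
    rwa [← Ideal.Quotient.eq_zero_iff_mem, smul_eq_mul, mul_comm, map_mul, hz]
  · rintro ⟨z, hz, rfl⟩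
    have hI : I ≤ LinearMap.ker (a.mkQ.comp (LinearMap.toSpanSingleton R R z)) := fun r hr ↦
      (Submodule.Quotient.mk_eq_zero a).2 <| by
        simpa [mul_comm] using Submodule.mem_colon.1 hz r hr
    exact ⟨Submodule.liftQ I _ hI, congr(a.mkQ $(one_smul R z))⟩

lemma exists_colon_eq_sup_span_singleton {a I : Ideal R}
    (h : Module.IsPrincipal R ((R ⧸ I) →ₗ[R] (R ⧸ a))) :
    ∃ u, a.colon I = a ⊔ Ideal.span {u} := by
  obtain ⟨y, hy⟩ := h.map (LinearMap.applyₗ (R := R) (M₂ := R ⧸ a) (1 : R ⧸ I))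
  obtain ⟨u, rfl⟩ := a.mkQ_surjective y
  refine ⟨u, ?_⟩
  rw [← LinearMap.range_eq_map, range_eval_one_hom_quotient, ← Set.image_singleton,
    ← Submodule.map_span] at hy
  have := congr(Submodule.comap a.mkQ $hy)
  rwa [Submodule.comap_map_mkQ, Submodule.comap_map_mkQ, sup_eq_right.2 Ideal.le_colon] at this

lemma exists_colon_eq_sup_span_singleton_of_ext {R : Type u} [CommRing R] {I : Ideal R}
    {rs : List R} (hrs : Sequence.IsWeaklyRegular R rs) (hI : ∀ r ∈ rs, r ∈ I)
    (h : Module.IsPrincipal R (((Ext R (ModuleCat.{u} R) rs.length).obj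
      (Opposite.op (ModuleCat.of R (R ⧸ I)))).obj (ModuleCat.of R R))) :
    ∃ u, (Ideal.ofList rs).colon I = Ideal.ofList rs ⊔ Ideal.span {u} := by
  obtain ⟨e⟩ := nonempty_ext_length_linearEquiv_hom_quotient (M := .of R R)
    (N := .of R (R ⧸ I)) hrs (by simpa [Ideal.annihilator_quotient] using hI)
  have hprin := ((extLinearEquivAbelianExt R _ _ _).trans e).isPrincipal_iff.1 h
  rw [smul_eq_mul, Ideal.mul_top] at hprin
  exact exists_colon_eq_sup_span_singleton hprin

end Colon

section Graded

universe u

open DirectSum Finset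

section Colon

variable {ι σ A : Type*} [CommRing A] [SetLike σ A] [AddSubmonoidClass σ A] [DecidableEq ι]
  [AddRightCancelMonoid ι] {𝒜 : ι → σ} [GradedRing 𝒜] {a b : Ideal A}

lemma isHomogeneous_colon_ideal (ha : a.IsHomogeneous 𝒜) (hb : b.IsHomogeneous 𝒜) :
    (a.colon (b : Set A)).IsHomogeneous 𝒜 := by
  obtain ⟨S, rfl⟩ := (Ideal.IsHomogeneous.iff_exists 𝒜 b).1 hb
  rw [Ideal.colon_span]
  refine fun i r hr ↦ Submodule.mem_colon.2 ?_
  rintro _ ⟨⟨s, j, hs⟩, hsS, rfl⟩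
  rw [smul_eq_mul, ← coe_decompose_mul_add_of_right_mem 𝒜 hs]
  exact ha _ (Submodule.mem_colon.1 hr s ⟨_, hsS, rfl⟩)
end Colon

variable {σ A : Type*} [CommRing A] [SetLike σ A] [AddSubgroupClass σ A] {𝒜 : ℕ → σ}
  [GradedRing 𝒜] {a b : Ideal A} {c u : A}

lemma decompose_mul_sub_decompose_zero_mul_mem {d : ℕ}
    (hu : ∀ i < d, (decompose 𝒜 u i : A) ∈ b) :
    (decompose 𝒜 (c * u) d - decompose 𝒜 c 0 * decompose 𝒜 u d : A) ∈ b := by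
  rw [decompose_mul, coe_mul_apply_eq_sum_antidiagonal,
    ← add_sum_erase _ _ (show (0, d) ∈ antidiagonal d by simp), add_sub_cancel_left]
  refine sum_mem fun ⟨i, j⟩ hij ↦ b.mul_mem_left _ (hu j ?_)
  simp only [mem_erase, ne_eq, Prod.mk.injEq, HasAntidiagonal.mem_antidiagonal] at hij
  lia

lemma mem_of_mul_mem_of_isUnit_decompose_zero (hb : b.IsHomogeneous 𝒜)
    (hc : IsUnit (decompose 𝒜 c 0 : A)) (h : c * u ∈ b) : u ∈ b := by
  refine (hb.mem_iff 𝒜).2 fun d ↦ ?_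
  induction d using Nat.strong_induction_on with
  | _ d ih =>
    have hd := b.sub_mem (hb d h) (decompose_mul_sub_decompose_zero_mul_mem (c := c) ih)
    rwa [sub_sub_cancel, Ideal.unit_mul_mem_iff_mem b hc] at hd

lemma mem_sup_span_singleton_decompose [IsLocalRing (𝒜 0)] {d : ℕ} (ha : a.IsHomogeneous 𝒜)
    (hlow : ∀ i < d, (decompose 𝒜 u i : A) ∈ a) (hd : (decompose 𝒜 u d : A) ∉ a)
    (h : (decompose 𝒜 u d : A) ∈ a ⊔ Ideal.span {u}) :
    u ∈ a ⊔ Ideal.span {(decompose 𝒜 u d : A)} := by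
  obtain ⟨y, hy, z, hz, hyz⟩ := Submodule.mem_sup.1 h
  obtain ⟨c, rfl⟩ := Ideal.mem_span_singleton'.1 hz
  have hcu : (decompose 𝒜 (c * u) d - decompose 𝒜 u d : A) ∈ a := by
    have hyd : (decompose 𝒜 y d + decompose 𝒜 (c * u) d : A) = decompose 𝒜 u d := by
      simpa [decompose_add] using congr((decompose 𝒜 $hyz d : A))
    rw [← hyd, sub_add_cancel_right]
    exact neg_mem (ha d hy)
  have hc : ¬ IsUnit (1 - decompose 𝒜 c 0) := fun hunit ↦ by
    refine hd ((Ideal.unit_mul_mem_iff_mem a (hunit.map (algebraMap (𝒜 0) A))).1 ?_)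
    have := a.sub_mem (decompose_mul_sub_decompose_zero_mul_mem (c := c) hlow) hcu
    rwa [sub_sub_sub_cancel_left, ← one_sub_mul] at this
  have hc₀ := (IsLocalRing.isUnit_or_isUnit_one_sub_self (decompose 𝒜 c 0)).resolve_right hc
  refine mem_of_mul_mem_of_isUnit_decompose_zero (𝒜 := 𝒜) (c := c) ?_
    (hc₀.map (algebraMap (𝒜 0) A)) ?_
  · exact ha.sup (Ideal.homogeneous_span 𝒜 _ (by simp [SetLike.isHomogeneousElem_coe]))
  · rw [← sub_eq_of_eq_add' hyz.symm]
    exact sub_mem (Ideal.mem_sup_right (Ideal.mem_span_singleton_self _)) (Ideal.mem_sup_left hy)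

theorem exists_isHomogeneousElem_sup_span_singleton_eq [IsLocalRing (𝒜 0)]
    (ha : a.IsHomogeneous 𝒜) (h : (a ⊔ Ideal.span {u}).IsHomogeneous 𝒜) :
    ∃ v, SetLike.IsHomogeneousElem 𝒜 v ∧ a ⊔ Ideal.span {u} = a ⊔ Ideal.span {v} := by
  classical
  by_cases hua : u ∈ a
  · exact ⟨0, ⟨0, zero_mem _⟩, by simp [hua]⟩
  have hd : ∃ d, (decompose 𝒜 u d : A) ∉ a := by
    rwa [ha.mem_iff 𝒜, not_forall] at hua
  let v : A := decompose 𝒜 u (Nat.find hd)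
  have hv : v ∈ a ⊔ Ideal.span {u} :=
    h _ (Ideal.mem_sup_right (Ideal.mem_span_singleton_self u))
  have huv : u ∈ a ⊔ Ideal.span {v} :=
    mem_sup_span_singleton_decompose ha (fun i hi ↦ not_not.1 (Nat.find_min hd hi))
      (Nat.find_spec hd) hv
  refine ⟨v, SetLike.isHomogeneousElem_coe _, le_antisymm ?_ ?_⟩ <;>
    simpa [Ideal.span_singleton_le_iff_mem]

theorem stmt_3_general {σ : Type*} {A : Type u} [CommRing A] [SetLike σ A]
    [AddSubgroupClass σ A] {𝒜 : ℕ → σ} [GradedRing 𝒜] [IsLocalRing (𝒜 0)] {I : Ideal A}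
    (hI : I.IsHomogeneous 𝒜) {rs : List A} (hrs : Sequence.IsWeaklyRegular A rs)
    (hrsI : ∀ r ∈ rs, r ∈ I) (hrs𝒜 : ∀ r ∈ rs, SetLike.IsHomogeneousElem 𝒜 r)
    (h : Module.IsPrincipal A (((Ext A (ModuleCat.{u} A) rs.length).obj
      (Opposite.op (ModuleCat.of A (A ⧸ I)))).obj (ModuleCat.of A A))) :
    ∃ u, SetLike.IsHomogeneousElem 𝒜 u ∧
      (Ideal.ofList rs).colon I = Ideal.ofList (rs ++ [u]) := by
  obtain ⟨u, hu⟩ := exists_colon_eq_sup_span_singleton_of_ext hrs hrsI h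
  have ha : (Ideal.ofList rs).IsHomogeneous 𝒜 := Ideal.homogeneous_span 𝒜 _ hrs𝒜
  obtain ⟨v, hv, huv⟩ := exists_isHomogeneousElem_sup_span_singleton_eq ha
    (hu ▸ isHomogeneous_colon_ideal ha hI)
  exact ⟨v, hv, by rw [hu, huv, Ideal.ofList_append, Ideal.ofList_singleton]⟩

end Graded

section Polynomial

attribute [local instance] MvPolynomial.gradedAlgebra

instance isLocalRing_homogeneousSubmodule_zero (σ k : Type*) [CommRing k] [IsLocalRing k] :
    IsLocalRing (homogeneousSubmodule σ k 0) := by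
  have : Nontrivial (homogeneousSubmodule σ k 0) :=
    (algebraMap (homogeneousSubmodule σ k 0) (MvPolynomial σ k)).domain_nontrivial
  refine .of_surjective' (algebraMap k (homogeneousSubmodule σ k 0)) fun ⟨p, hp⟩ ↦ ?_
  rw [homogeneousSubmodule_zero, Submodule.mem_one] at hp
  exact hp.imp fun r hr ↦ Subtype.ext hr

lemma IsHomogeneousIdeal.isHomogeneous {I : Ideal (MvPolynomial (Fin (n + 1)) k)}
    (hI : IsHomogeneousIdeal I) :
    I.IsHomogeneous (homogeneousSubmodule (Fin (n + 1)) k) := by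
  obtain ⟨S, hS, rfl⟩ := hI
  exact Ideal.homogeneous_span _ S hS

/-- Watanabe's Lemma, first part: linking a non-complete-intersection height-three
Gorenstein ideal by a regular sequence of homogeneous elements extendable to a minimal
generating set produces an almost complete intersection `(f, g, h, u)`. -/
theorem stmt_3 (I : Ideal (MvPolynomial (Fin (n+1)) k))
    (hGor : IsArithGorHt3 I) (hnotCI : ¬ IsCI I)
    (f g h : MvPolynomial (Fin (n+1)) k)
    (hfI : f ∈ I) (hgI : g ∈ I) (hhI : h ∈ I)
    (hfhom : ∃ d, MvPolynomial.IsHomogeneous f d)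
    (hghom : ∃ d, MvPolynomial.IsHomogeneous g d)
    (hhhom : ∃ d, MvPolynomial.IsHomogeneous h d)
    (hreg : RingTheory.Sequence.IsRegular (MvPolynomial (Fin (n+1)) k) [f, g, h])
    (hext : ∃ S : Finset (MvPolynomial (Fin (n+1)) k), f ∈ S ∧ g ∈ S ∧ h ∈ S ∧
      Ideal.span (S : Set (MvPolynomial (Fin (n+1)) k)) = I ∧ S.card = mu I) :
    ∃ u : MvPolynomial (Fin (n+1)) k, (∃ e, MvPolynomial.IsHomogeneous u e) ∧
      (Ideal.span {f, g, h}).colon I = Ideal.span {f, g, h, u} := by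
  obtain ⟨-, hI, -, -, m, hm⟩ := hGor
  have key := stmt_3_general (rs := [f, g, h]) hI.isHomogeneous hreg.toIsWeaklyRegular
    (by simp [hfI, hgI, hhI]) (by simpa using ⟨hfhom, hghom, hhhom⟩) ⟨m, hm.symm⟩
  simpa [SetLike.IsHomogeneousElem, Ideal.ofList, Set.insert_def] using key

end Polynomial

end
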